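/- Let m be an integer with 1 ≤ m ≤ 5 such that F(x) = x^6 + 72 x^m + 71 is irreducible over ℚ, and let K = ℚ(α) for a root α of F. Then 6 divides the index i(K); in particular K is not monogenic. -/

import Mathlib

open Polynomial NumberField

/-- The index `(ℤ_K : ℤ[θ])` of the subring `ℤ[θ]` in the ring of integers of `K`. -/
noncomputable def subIndex {K : Type*} [Field K] [NumberField K] (θ : 𝓞 K) : ℕ :=
  ((Algebra.adjoin ℤ ({θ} : Set (𝓞 K))).toSubring.toAddSubgroup).index

/-! Homomorphisms from `𝓞 K` to a field of characteristic `p` satisfy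
`∑ φ, e(ker φ) ≤ [K : ℚ]`. A finite family for which equality is reached is therefore complete,
hence stable under composition with the `p ^ r`-th power Frobenius. If moreover every member takes
values in the field of `p ^ r` elements on generators that tell the members apart, then Frobenius
fixes each of them, so all of them take values there on all of `𝓞 K`. When `p ∤ (𝓞 K : ℤ[θ])`,
members are distinguished by their values at `θ`, so there are at most `p ^ r` of them.

For `F ≡ X ^ 6 - 1` modulo `72` there are families with more than `p ^ r` members. Modulo `3`
they are the four `(α, β) ↦ (±1, 0)`, `(±1, 2)`, where `3 * β = (α ^ 2 - 1) ^ 2`, with ramification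
indices `1, 2`. Modulo `2` they are the six `(α, δ) ↦ (ω ^ i, 0)`, `(ω ^ i, 1)`, where
`2 * δ = α ^ 3 - 1` and `ω` is a primitive cube root of unity, with values in the field
of four elements. -/

theorem monic_X_sq_sub_linear {R : Type*} [CommRing R] (u v : R) :
    (X ^ 2 - (C u * X + C v)).Monic :=
  monic_X_pow_sub (degree_linear_le.trans_lt (by decide))

theorem minpoly_eq_of_monic_of_irreducible {R S : Type*} [CommRing R] [IsDomain R]
    [IsIntegrallyClosed R] [CommRing S] [IsDomain S] [Algebra R S] [Module.IsTorsionFree R S]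
    {x : S} {F : R[X]} (hF : F.Monic) (hirr : Irreducible F) (hroot : aeval x F = 0) :
    minpoly R x = F := by
  have hx : IsIntegral R x := ⟨F, hF, hroot⟩
  refine eq_of_monic_of_associated (minpoly.monic hx) hF ?_
  exact ((hirr.dvd_iff.1 (minpoly.isIntegrallyClosed_dvd hx hroot)).resolve_left
    (minpoly.not_isUnit R x)).symm

theorem aeval_sub_eq_of_C_dvd_minpoly_sub {R S : Type*} [CommRing R] [CommRing S] [Algebra R S]
    {n : R} {x : S} {f : R[X]} (h : C n ∣ minpoly R x - f) :
    ∃ H, minpoly R x = f + C n * H ∧ aeval x f = -(algebraMap R S n * aeval x H) := by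
  obtain ⟨H, hH⟩ := h
  have hmin : minpoly R x = f + C n * H := by linear_combination hH
  refine ⟨H, hmin, eq_neg_of_add_eq_zero_left ?_⟩
  rw [← aeval_C, ← map_mul, ← map_add, ← hmin, minpoly.aeval]

theorem natDegree_eq_of_C_dvd_sub {R : Type*} [CommRing R] {a : R} (ha : ¬ IsUnit a) {F G : R[X]}
    (hF : F.Monic) (hG : G.Monic) (h : C a ∣ F - G) : F.natDegree = G.natDegree := by
  have : Nontrivial (R ⧸ Ideal.span {a}) :=
    Ideal.Quotient.nontrivial_iff.2 (by rwa [Ne, Ideal.span_singleton_eq_top])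
  obtain ⟨H, hH⟩ := h
  have hmap : F.map (Ideal.Quotient.mk (Ideal.span {a})) = G.map (Ideal.Quotient.mk _) := by
    rw [← sub_eq_zero, ← Polynomial.map_sub, hH]
    simp
  rw [← hF.natDegree_map (Ideal.Quotient.mk (Ideal.span {a})), hmap, hG.natDegree_map]

theorem exists_mul_eq_and_sq_eq_of_sq_eq {R : Type*} [CommRing R] [IsDomain R]
    [IsIntegrallyClosed R] {n x u v : R} (hn : n ≠ 0) (h : x ^ 2 = n * u * x + n ^ 2 * v) :
    ∃ y, n * y = x ∧ y ^ 2 = u * y + v := by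
  have hnK : algebraMap R (FractionRing R) n ≠ 0 := by simpa using hn
  have hK := congrArg (algebraMap R (FractionRing R)) h
  simp only [map_pow, map_add, map_mul] at hK
  have hint : IsIntegral R (algebraMap R (FractionRing R) x / algebraMap R (FractionRing R) n) := by
    refine ⟨_, monic_X_sq_sub_linear u v, ?_⟩
    simp only [eval₂_sub, eval₂_add, eval₂_mul, eval₂_C, eval₂_pow, eval₂_X]
    field_simp
    linear_combination hK
  obtain ⟨y, hy⟩ := IsIntegrallyClosed.isIntegral_iff.1 hint
  have hxy : n * y = x := by
    apply IsFractionRing.injective R (FractionRing R)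
    rw [map_mul, hy, mul_div_cancel₀ _ hnK]
  refine ⟨y, hxy, mul_left_cancel₀ (pow_ne_zero 2 hn) ?_⟩
  linear_combination h + (n * y + x - n * u) * hxy

theorem exists_ringHom_comp_eq_of_isIntegral {A B k : Type*} [CommRing A] [CommRing B] [Field k]
    [IsAlgClosed k] {f : A →+* B} (hf : f.IsIntegral) {ψ : A →+* k}
    (hker : RingHom.ker f ≤ RingHom.ker ψ) : ∃ φ : B →+* k, φ.comp f = ψ := by
  let := f.toAlgebra
  have : Algebra.IsIntegral A B := ⟨hf⟩
  have := RingHom.ker_isPrime ψ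
  obtain ⟨Q, -, hQ, hQψ⟩ :=
    Ideal.exists_ideal_over_prime_of_isIntegral (RingHom.ker ψ) (⊥ : Ideal B) hker
  have : Q.LiesOver (RingHom.ker ψ) := ⟨hQψ.symm⟩
  let : Algebra (A ⧸ RingHom.ker ψ) k := (RingHom.kerLift ψ).toAlgebra
  have : FaithfulSMul (A ⧸ RingHom.ker ψ) k :=
    (faithfulSMul_iff_algebraMap_injective _ _).2 (RingHom.kerLift_injective ψ)
  have : Module.IsTorsionFree (A ⧸ RingHom.ker ψ) (B ⧸ Q) := FaithfulSMul.to_isTorsionFree _ _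
  let lift : (B ⧸ Q) →ₐ[A ⧸ RingHom.ker ψ] k := IsAlgClosed.lift
  refine ⟨lift.toRingHom.comp (Ideal.Quotient.mk Q), ?_⟩
  ext a
  exact lift.commutes (Ideal.Quotient.mk _ a)

theorem C_dvd_of_C_dvd_monic_mul {R : Type*} [CommRing R] [IsDomain R] {p : R} (hp : Prime p)
    {g h : R[X]} (hg : g.Monic) (hdvd : C p ∣ g * h) : C p ∣ h :=
  ((prime_C_iff.2 hp).dvd_or_dvd hdvd).resolve_left fun h ↦ hp.not_isUnit (hg.isPrimitive p h)

theorem exists_eq_mul_add_of_aeval_add_aeval_mul_eq_zero {R S : Type*} [CommRing R] [IsDomain R]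
    [IsIntegrallyClosed R] [CommRing S] [IsDomain S] [Algebra R S] [Module.IsTorsionFree R S]
    {p : R} (hp : Prime p) {x y : S} (hx : IsIntegral R x) {g w G : R[X]} (hg : g.Monic)
    (hmin : minpoly R x = g * w + C p * G) (hy : algebraMap R S p * y = aeval x g) {r s : R[X]}
    (hrs : aeval x r + aeval x s * y = 0) :
    ∃ t s', r = G * t - s' * g ∧ s = w * t + C p * s' := by
  obtain ⟨t, ht⟩ : minpoly R x ∣ C p * r + s * g := by
    refine minpoly.isIntegrallyClosed_dvd hx ?_
    simp only [map_add, map_mul, aeval_C, ← hy]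
    linear_combination algebraMap R S p * hrs
  obtain ⟨s', hs'⟩ : C p ∣ s - w * t :=
    C_dvd_of_C_dvd_monic_mul hp hg ⟨G * t - r, by linear_combination ht + t * hmin⟩
  have hpX : (C p : R[X]) ≠ 0 := C_ne_zero.2 hp.ne_zero
  refine ⟨t, s', mul_left_cancel₀ hpX ?_, by linear_combination hs'⟩
  linear_combination ht + t * hmin - g * hs'

theorem exists_eq_linear_add_mul {R : Type*} [CommRing R] [Nontrivial R] (u v : R) (f : R[X]) :
    ∃ r s d, f = C r + C s * X + (X ^ 2 - (C u * X + C v)) * d := by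
  have hq := monic_X_sq_sub_linear u v
  have hdeg : (X ^ 2 - (C u * X + C v)).natDegree = 2 := by compute_degree!
  obtain ⟨s, r, hsr⟩ := exists_eq_X_add_C_of_natDegree_le_one <| Nat.lt_succ_iff.1 <|
    hdeg ▸ natDegree_modByMonic_lt f hq fun h ↦ by simp [h] at hdeg
  exact ⟨r, s, _, by rw [add_comm (C r), ← hsr, modByMonic_add_div]⟩

theorem exists_algHom_apply_eq {R S k : Type*} [CommRing R] [IsDomain R]
    [IsIntegrallyClosed R] [CommRing S] [IsDomain S] [Algebra R S] [Module.IsTorsionFree R S]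
    [Algebra.IsIntegral R S] [Field k] [IsAlgClosed k] [Algebra R k]
    {p : R} (hp : Prime p) {x y : S} {g w G u v : R[X]} (hg : g.Monic)
    (hmin : minpoly R x = g * w + C p * G) (hy : algebraMap R S p * y = aeval x g)
    (hy2 : y ^ 2 = aeval x u * y + aeval x v) {a c : k} (hpk : algebraMap R k p = 0)
    (hga : aeval a g = 0) (hwa : aeval a w = 0) (hGa : aeval a G = 0)
    (hc : c ^ 2 = aeval a u * c + aeval a v) : ∃ φ : S →ₐ[R] k, φ x = a ∧ φ y = c := by
  let evalS : R[X][X] →+* S := eval₂RingHom (aeval x : R[X] →ₐ[R] S).toRingHom y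
  let evalk : R[X][X] →+* k := eval₂RingHom (aeval a : R[X] →ₐ[R] k).toRingHom c
  have hS : evalS.IsIntegral := by
    refine RingHom.IsIntegral.tower_top (C.comp C) _ ?_
    have : evalS.comp (C.comp C) = algebraMap R S := by ext; simp [evalS]
    rw [this]
    exact algebraMap_isIntegral_iff.2 ‹_›
  -- The relations between `x` and `y` are generated by those in the hypotheses, and `(a, c)`
  -- satisfies all of these.
  have hker : RingHom.ker evalS ≤ RingHom.ker evalk := fun f hf ↦ by
    obtain ⟨r, s, d, rfl⟩ := exists_eq_linear_add_mul u v f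
    have hrs : aeval x r + aeval x s * y = 0 := by
      simpa [RingHom.mem_ker, evalS, hy2] using hf
    obtain ⟨t, s', rfl, rfl⟩ := exists_eq_mul_add_of_aeval_add_aeval_mul_eq_zero hp
      (Algebra.IsIntegral.isIntegral x) hg hmin hy hrs
    simp [RingHom.mem_ker, evalk, hc, hga, hwa, hGa, hpk]
  obtain ⟨φ, hφ⟩ := exists_ringHom_comp_eq_of_isIntegral hS hker
  refine ⟨{ φ with commutes' := fun r ↦ ?_ }, ?_, ?_⟩
  · simpa [evalS, evalk] using DFunLike.congr_fun hφ (C (C r))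
  · simpa [evalS, evalk] using DFunLike.congr_fun hφ (C X)
  · simpa [evalS, evalk] using DFunLike.congr_fun hφ X

theorem liesOver_ker {R S k : Type*} [CommRing R] [CommRing S] [Algebra R S] [CommRing k]
    [Algebra R k] (φ : S →ₐ[R] k) :
    (RingHom.ker φ).LiesOver (RingHom.ker (algebraMap R k)) :=
  ⟨by ext; simp [RingHom.mem_ker]⟩

section
variable {R S k : Type*} [CommRing R] [CommRing S] [Algebra R S] [Module.Finite R S]
  [Field k] [Algebra R k]

theorem card_algHom_ker_eq_le_inertiaDeg [(RingHom.ker (algebraMap R k)).IsMaximal]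
    (q : Ideal S) [q.IsMaximal] [q.LiesOver (RingHom.ker (algebraMap R k))] :
    Nat.card {φ : S →ₐ[R] k // RingHom.ker φ = q} ≤ q.inertiaDeg R := by
  set p := RingHom.ker (algebraMap R k)
  let : Field (R ⧸ p) := Ideal.Quotient.field p
  let : Algebra (R ⧸ p) k := (RingHom.kerLift (algebraMap R k)).toAlgebra
  have : IsScalarTower R (R ⧸ p) k := .of_algebraMap_eq fun _ ↦ rfl
  let residueHom (φ : {φ : S →ₐ[R] k // RingHom.ker φ = q}) : (S ⧸ q) →ₐ[R ⧸ p] k :=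
    (Ideal.Quotient.liftₐ q φ.1 fun x hx ↦ φ.2.ge hx).extendScalarsOfSurjective
      Ideal.Quotient.mk_surjective
  have residueHom_injective : Function.Injective residueHom := fun φ ψ h ↦
    Subtype.ext (AlgHom.ext fun x ↦ DFunLike.congr_fun h (Ideal.Quotient.mk q x))
  calc Nat.card {φ : S →ₐ[R] k // RingHom.ker φ = q}
      ≤ Nat.card ((S ⧸ q) →ₐ[R ⧸ p] k) := Nat.card_le_card_of_injective _ residueHom_injective
    _ ≤ Module.finrank (R ⧸ p) (S ⧸ q) := card_algHom_le_finrank _ _ _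
    _ = q.inertiaDeg R := (Ideal.inertiaDeg_eq_of_isMaximal p q).symm

theorem sum_ramificationIdx_ker_le_finrank [IsDomain R] [Module.Flat R S]
    [(RingHom.ker (algebraMap R k)).IsMaximal] [Fintype (S →ₐ[R] k)] :
    ∑ φ : S →ₐ[R] k, (RingHom.ker φ).ramificationIdx R ≤ Module.finrank R S := by
  classical
  set p := RingHom.ker (algebraMap R k)
  let := (Algebra.QuasiFinite.finite_primesOver (S := S) p).fintype
  have ker_mem (φ : S →ₐ[R] k) : RingHom.ker φ ∈ p.primesOver S :=
    ⟨RingHom.ker_isPrime φ, liesOver_ker φ⟩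
  let kernel (φ : S →ₐ[R] k) : p.primesOver S := ⟨RingHom.ker φ, ker_mem φ⟩
  have card_fiber (q : p.primesOver S) :
      Fintype.card {φ // kernel φ = q} ≤ q.1.inertiaDeg R := by
    rw [← Nat.card_eq_fintype_card]
    simpa only [kernel, Subtype.ext_iff] using
      card_algHom_ker_eq_le_inertiaDeg (R := R) (k := k) q.1
  calc ∑ φ, (RingHom.ker φ).ramificationIdx R
      = ∑ q, ∑ φ : {φ // kernel φ = q}, (kernel φ).1.ramificationIdx R :=
        (Fintype.sum_fiberwise kernel _).symm
    _ = ∑ q, Fintype.card {φ // kernel φ = q} * q.1.ramificationIdx R :=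
        Finset.sum_congr rfl fun q _ ↦ by
          rw [Finset.sum_congr rfl fun φ _ ↦ by rw [φ.2]]; simp
    _ ≤ ∑ q : p.primesOver S, q.1.ramificationIdx R * q.1.inertiaDeg R :=
        Finset.sum_le_sum fun q _ ↦ by
          rw [mul_comm]; exact Nat.mul_le_mul_left _ (card_fiber q)
    _ = Module.finrank R S := Ideal.sum_ramification_inertia_eq_finrank p S

theorem algHom_surjective_of_finrank_le_sum [IsDomain R] [Module.Flat R S]
    [(RingHom.ker (algebraMap R k)).IsMaximal] {ι : Type*} [Fintype ι] {φ : ι → S →ₐ[R] k}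
    (hφ : Function.Injective φ) {e : ι → ℕ}
    (he : ∀ i, e i ≤ (RingHom.ker (φ i)).ramificationIdx R)
    (hsum : Module.finrank R S ≤ ∑ i, e i) : Function.Surjective φ := by
  classical
  let := Fintype.ofFinite (S →ₐ[R] k)
  by_contra! h
  obtain ⟨ψ, hψ⟩ : ∃ ψ, ∀ i, φ i ≠ ψ := by simpa [Function.Surjective] using h
  have := RingHom.ker_isPrime ψ
  refine (sum_ramificationIdx_ker_le_finrank (R := R) (S := S) (k := k)).not_gt ?_
  calc Module.finrank R S
      ≤ ∑ i, (RingHom.ker (φ i)).ramificationIdx R :=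
        hsum.trans (Finset.sum_le_sum fun i _ ↦ he i)
    _ = ∑ χ ∈ Finset.univ.map ⟨φ, hφ⟩, (RingHom.ker χ).ramificationIdx R := by
        rw [Finset.sum_map]; rfl
    _ < ∑ χ : S →ₐ[R] k, (RingHom.ker χ).ramificationIdx R :=
        Finset.sum_lt_sum_of_subset (Finset.subset_univ _) (Finset.mem_univ ψ)
          (by simpa using hψ) (Ideal.ramificationIdx_pos _ R) fun _ _ _ ↦ Nat.zero_le _
end

theorem le_ramificationIdx_of_map_le_pow {R S : Type*} [CommRing R] [CommRing S]
    [IsDedekindDomain S] [Algebra R S] {p : Ideal R} {q : Ideal S} [q.IsPrime] [q.LiesOver p]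
    (hp : p.map (algebraMap R S) ≠ ⊥) {e : ℕ} (h : p.map (algebraMap R S) ≤ q ^ e) :
    e ≤ q.ramificationIdx R := by
  rw [Ideal.IsDedekindDomain.ramificationIdx_eq_multiplicity p q hp]
  refine FiniteMultiplicity.le_multiplicity_of_pow_dvd ?_ (Ideal.dvd_iff_le.2 h)
  refine FiniteMultiplicity.of_not_isUnit ?_ hp
  simpa using ‹q.IsPrime›.ne_top

theorem card_le_of_injective_of_pow_eq {ι k : Type*} [Fintype ι] [Field k] {q : ℕ}
    (hq : 1 < q) {t : ι → k} (ht : Function.Injective t) (hpow : ∀ i, t i ^ q = t i) :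
    Fintype.card ι ≤ q := by
  classical
  have hroots : Finset.univ.map ⟨t, ht⟩ ⊆ (X ^ q - X : k[X]).roots.toFinset := fun x hx ↦ by
    obtain ⟨i, -, rfl⟩ := Finset.mem_map.1 hx
    simp [FiniteField.X_pow_card_sub_X_ne_zero k hq, hpow]
  calc Fintype.card ι = (Finset.univ.map ⟨t, ht⟩).card := by simp
    _ ≤ (X ^ q - X : k[X]).roots.toFinset.card := Finset.card_le_card hroots
    _ ≤ (X ^ q - X : k[X]).natDegree := (Multiset.toFinset_card_le _).trans (card_roots' _)
    _ = q := FiniteField.X_pow_card_sub_X_natDegree_eq k hq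

theorem isMaximal_ker_algebraMap_int (k : Type*) [Field k] (p : ℕ) [Fact p.Prime] [CharP k p] :
    (RingHom.ker (algebraMap ℤ k)).IsMaximal := by
  rw [CharP.ker_intAlgebraMap_eq_span p]
  infer_instance

section
variable {S k : Type*} [CommRing S] [IsDomain S] [IsIntegrallyClosed S] [CharZero S]
  [Algebra.IsIntegral ℤ S] [Field k] [IsAlgClosed k]

theorem exists_three_mul_eq_and_algHom [CharP k 3] {α : S}
    (hmin : C 9 ∣ minpoly ℤ α - (X ^ 6 - 1)) :
    ∃ β : S, 3 * β = (α ^ 2 - 1) ^ 2 ∧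
      ∀ a c : k, a ^ 2 = 1 → c ^ 2 = 2 * c → ∃ φ : S →ₐ[ℤ] k, φ α = a ∧ φ β = c := by
  obtain ⟨H, hH, hα⟩ := aeval_sub_eq_of_C_dvd_minpoly_sub hmin
  simp only [map_sub, map_pow, aeval_X, map_one, map_ofNat] at hα
  obtain ⟨β, hβ, hβ2⟩ : ∃ β : S, 3 * β = (α ^ 2 - 1) ^ 2 ∧
      β ^ 2 = 2 * β + (α ^ 2 - 1 + (4 - α ^ 2) * aeval α H) :=
    exists_mul_eq_and_sq_eq_of_sq_eq (by norm_num) (by linear_combination (α ^ 2 - 4) * hα)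
  refine ⟨β, hβ, fun a c ha hc ↦ ?_⟩
  have hk3 : (3 : k) = 0 := CharP.cast_eq_zero k 3
  have hk4 : (4 : k) = 1 := by linear_combination hk3
  refine exists_algHom_apply_eq (p := 3) (g := (X ^ 2 - 1) ^ 2) (w := X ^ 2 - 1)
    (G := (X ^ 2 - 1) ^ 2 + (X ^ 2 - 1) + C 3 * H) (u := C 2)
    (v := X ^ 2 - 1 + (C 4 - X ^ 2) * H) Int.prime_three ?_ ?_ ?_ ?_ ?_ ?_ ?_ ?_ ?_
  · exact (monic_X_pow_sub_C (1 : ℤ) two_ne_zero).pow 2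
  · rw [hH]; simp only [map_ofNat]; ring
  · simpa using hβ
  · simpa [map_ofNat] using hβ2
  · simpa using hk3
  · simp [ha]
  · simp [ha]
  · simp [map_ofNat, ha, hk3]
  · simp [map_ofNat, ha, hc, hk4]

theorem exists_two_mul_eq_and_algHom [CharP k 2] {α : S}
    (hmin : C 8 ∣ minpoly ℤ α - (X ^ 6 - 1)) :
    ∃ δ : S, 2 * δ = α ^ 3 - 1 ∧
      ∀ a c : k, a ^ 3 = 1 → c ^ 2 = c → ∃ φ : S →ₐ[ℤ] k, φ α = a ∧ φ δ = c := by
  obtain ⟨H, hH, hα⟩ := aeval_sub_eq_of_C_dvd_minpoly_sub hmin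
  simp only [map_sub, map_pow, aeval_X, map_one, map_ofNat] at hα
  obtain ⟨δ, hδ, hδ2⟩ : ∃ δ : S, 2 * δ = α ^ 3 - 1 ∧ δ ^ 2 = -1 * δ + -2 * aeval α H :=
    exists_mul_eq_and_sq_eq_of_sq_eq two_ne_zero (by linear_combination hα)
  refine ⟨δ, hδ, fun a c ha hc ↦ ?_⟩
  have hk2 : (2 : k) = 0 := CharP.cast_eq_zero k 2
  refine exists_algHom_apply_eq (p := 2) (g := X ^ 3 - 1) (w := X ^ 3 - 1)
    (G := X ^ 3 - 1 + C 4 * H) (u := -1) (v := C (-2) * H)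
    Int.prime_two ?_ ?_ ?_ ?_ ?_ ?_ ?_ ?_ ?_
  · exact monic_X_pow_sub_C (1 : ℤ) three_ne_zero
  · rw [hH]; simp only [map_ofNat]; ring
  · simpa using hδ
  · simpa [map_ofNat] using hδ2
  · simpa using hk2
  · simp [ha]
  · simp [ha]
  · have hk4 : (4 : k) = 0 := by linear_combination 2 * hk2
    simp [map_ofNat, ha, hk4]
  · simp only [map_neg, map_mul, map_one, map_ofNat]
    linear_combination hc + (c + aeval a H) * hk2
end

section
variable {K : Type*} [Field K] [NumberField K]

theorem subIndex_nsmul_mem_adjoin (θ x : 𝓞 K) : subIndex θ • x ∈ Algebra.adjoin ℤ {θ} :=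
  (Algebra.adjoin ℤ {θ}).toSubring.toAddSubgroup.nsmul_index_mem x

theorem algHom_ext_of_not_dvd_subIndex {p : ℕ} (hp : p.Prime) {R : Type*} [CommRing R]
    [CharP R p] {θ : 𝓞 K} (hθ : ¬ p ∣ subIndex θ) {φ ψ : 𝓞 K →ₐ[ℤ] R} (h : φ θ = ψ θ) :
    φ = ψ := by
  have hunit : IsUnit (subIndex θ : R) := (CharP.isUnit_natCast_iff hp).2 hθ
  have heq : Set.EqOn φ ψ (Algebra.adjoin ℤ {θ}) :=
    AlgHom.eqOn_adjoin_iff.2 (by simpa using h)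
  ext x
  refine hunit.mul_left_cancel ?_
  simpa using heq (subIndex_nsmul_mem_adjoin θ x)

theorem dvd_subIndex_of_lt_card {p : ℕ} (hp : p.Prime) {k : Type*} [Field k] [CharP k p]
    {q : ℕ} (hq : 1 < q) {ι : Type*} [Fintype ι] {φ : ι → 𝓞 K →ₐ[ℤ] k}
    (hφ : Function.Injective φ) {θ : 𝓞 K} (hθ : ∀ i, φ i θ ^ q = φ i θ)
    (hcard : q < Fintype.card ι) : p ∣ subIndex θ := by
  by_contra h
  have : Function.Injective fun i ↦ φ i θ := fun i j hij ↦
    hφ (algHom_ext_of_not_dvd_subIndex hp h hij)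
  exact hcard.not_ge (card_le_of_injective_of_pow_eq hq this hθ)

theorem le_ramificationIdx_int_of_natCast_mem_pow {p : ℕ} [Fact p.Prime] {P : Ideal (𝓞 K)}
    [P.IsPrime] [P.LiesOver (Ideal.span {(p : ℤ)})] {e : ℕ} (h : (p : 𝓞 K) ∈ P ^ e) :
    e ≤ P.ramificationIdx ℤ := by
  have hp : p ≠ 0 := (Fact.out : p.Prime).ne_zero
  apply le_ramificationIdx_of_map_le_pow (p := Ideal.span {(p : ℤ)}) <;>
    simpa [Ideal.map_span, Ideal.span_le]

theorem dvd_subIndex_of_finrank_le_sum {p : ℕ} [Fact p.Prime] {k : Type*} [Field k] [CharP k p]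
    {r : ℕ} (hr : r ≠ 0) {ι : Type*} [Fintype ι] {φ : ι → 𝓞 K →ₐ[ℤ] k} {x y : 𝓞 K}
    (hφ : Function.Injective fun i ↦ (φ i x, φ i y))
    (hx : ∀ i, φ i x ^ p ^ r = φ i x) (hy : ∀ i, φ i y ^ p ^ r = φ i y)
    {e : ι → ℕ} (he : ∀ i, (p : 𝓞 K) ∈ RingHom.ker (φ i) ^ e i)
    (hsum : Module.finrank ℚ K ≤ ∑ i, e i) (hcard : p ^ r < Fintype.card ι) (θ : 𝓞 K) :
    p ∣ subIndex θ := by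
  have hp : p.Prime := Fact.out
  have := isMaximal_ker_algebraMap_int k p
  have hφ' : Function.Injective φ := fun i j hij ↦ hφ (by simp [hij])
  refine dvd_subIndex_of_lt_card hp (Nat.one_lt_pow hr hp.one_lt) hφ' (fun i ↦ ?_) hcard
  have hsurj : Function.Surjective φ := by
    refine algHom_surjective_of_finrank_le_sum hφ' (e := e) (fun i ↦ ?_) ?_
    · have := RingHom.ker_isPrime (φ i)
      have : (RingHom.ker (φ i)).LiesOver (Ideal.span {(p : ℤ)}) :=
        CharP.ker_intAlgebraMap_eq_span (R := k) p ▸ liesOver_ker (φ i)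
      exact le_ramificationIdx_int_of_natCast_mem_pow (he i)
    · rwa [RingOfIntegers.rank]
  obtain ⟨j, hj⟩ := hsurj (((iterateFrobenius k p r) : k →+* k).toIntAlgHom.comp (φ i))
  have hfrob (z) : φ j z = φ i z ^ p ^ r := by simp [hj, iterateFrobenius_def]
  have : j = i := hφ (by simp [hfrob, hx, hy])
  rw [← hfrob, this]

theorem finrank_eq_natDegree_minpoly_int {α : 𝓞 K} (hgen : Algebra.adjoin ℚ {(α : K)} = ⊤) :
    Module.finrank ℚ K = (minpoly ℤ α).natDegree := by
  let pb := PowerBasis.ofAdjoinEqTop (Algebra.IsIntegral.isIntegral (α : K)) hgen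
  have hα : IsIntegral ℤ α := Algebra.IsIntegral.isIntegral α
  rw [pb.finrank, ← pb.natDegree_minpoly, PowerBasis.ofAdjoinEqTop_gen,
    ← (minpoly.monic hα).natDegree_map (algebraMap ℤ ℚ),
    minpoly.isIntegrallyClosed_eq_field_fractions ℚ K hα]

theorem three_dvd_subIndex_of_C_nine_dvd_minpoly_sub {α : 𝓞 K} (hrank : Module.finrank ℚ K = 6)
    (hmin : C 9 ∣ minpoly ℤ α - (X ^ 6 - 1)) (θ : 𝓞 K) : 3 ∣ subIndex θ := by
  let k := AlgebraicClosure (ZMod 3)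
  have hk3 : (3 : k) = 0 := CharP.cast_eq_zero k 3
  have hk2 : (2 : k) = -1 := by linear_combination hk3
  have hk : (1 : k) ≠ -1 := fun h ↦ one_ne_zero (by linear_combination hk3 - h : (1 : k) = 0)
  obtain ⟨β, hβ, hom⟩ := exists_three_mul_eq_and_algHom (k := k) hmin
  choose φ hφα hφβ using fun i j : Fin 2 ↦
    hom (![1, -1] i) (![0, 2] j) (by fin_cases i <;> simp) (by fin_cases j <;> simp [pow_two])
  refine dvd_subIndex_of_finrank_le_sum (p := 3) one_ne_zero (x := α) (y := β)
    (φ := fun ij : Fin 2 × Fin 2 ↦ φ ij.1 ij.2) (e := fun ij ↦ 1 + ij.2) ?_ ?_ ?_ ?_ ?_ ?_ θ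
  · rintro ⟨i, j⟩ ⟨i', j'⟩ h
    simp only [hφα, hφβ, hk2] at h
    fin_cases i <;> fin_cases j <;> fin_cases i' <;> fin_cases j' <;> simp_all
  · rintro ⟨i, j⟩
    simp only [hφα]
    fin_cases i <;> simp [Odd.neg_one_pow, show Odd 3 by decide]
  · rintro ⟨i, j⟩
    simp only [hφβ, hk2]
    fin_cases j <;> simp [Odd.neg_one_pow, show Odd 3 by decide]
  · rintro ⟨i, j⟩
    have h3 : 3 ∈ RingHom.ker (φ i j) := by simp [RingHom.mem_ker, map_ofNat, hk3]
    fin_cases j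
    · simpa using h3
    · change 3 ∈ RingHom.ker (φ i 1) ^ 2
      have := RingHom.ker_isPrime (φ i 1)
      have hβmem : β ∉ RingHom.ker (φ i 1) := by simp [RingHom.mem_ker, hφβ, hk2]
      have h3β : 3 * β ∈ RingHom.ker (φ i 1) ^ 2 := by
        rw [hβ]
        exact Ideal.pow_mem_pow (by fin_cases i <;> simp [RingHom.mem_ker, hφα]) 2
      exact (Ideal.IsPrime.mem_pow_mul _ h3β).resolve_right hβmem
  · simp [hrank, Fintype.sum_prod_type]
  · simp

theorem two_dvd_subIndex_of_C_eight_dvd_minpoly_sub {α : 𝓞 K} (hrank : Module.finrank ℚ K = 6)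
    (hmin : C 8 ∣ minpoly ℤ α - (X ^ 6 - 1)) (θ : 𝓞 K) : 2 ∣ subIndex θ := by
  let k := AlgebraicClosure (ZMod 2)
  have hk2 : (2 : k) = 0 := CharP.cast_eq_zero k 2
  have hk3 : ((3 : ℕ) : k) = 1 := by
    push_cast
    linear_combination hk2
  have : NeZero ((3 : ℕ) : k) := ⟨hk3 ▸ one_ne_zero⟩
  obtain ⟨ω, hω⟩ := HasEnoughRootsOfUnity.exists_primitiveRoot k 3
  obtain ⟨δ, -, hom⟩ := exists_two_mul_eq_and_algHom (k := k) hmin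
  choose φ hφα hφδ using fun (i : Fin 3) (j : Fin 2) ↦
    hom (ω ^ i.1) (![0, 1] j) (by rw [pow_right_comm, hω.pow_eq_one, one_pow])
      (by fin_cases j <;> simp)
  refine dvd_subIndex_of_finrank_le_sum (p := 2) two_ne_zero (x := α) (y := δ)
    (φ := fun ij : Fin 3 × Fin 2 ↦ φ ij.1 ij.2) (e := fun _ ↦ 1) ?_ ?_ ?_ ?_ ?_ ?_ θ
  · rintro ⟨i, j⟩ ⟨i', j'⟩ h
    simp only [hφα, hφδ, Prod.mk.injEq] at h
    have hi : i = i' := Fin.ext (hω.pow_inj i.2 i'.2 h.1)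
    have hj : j = j' := by
      have := h.2
      fin_cases j <;> fin_cases j' <;> simp_all
    rw [hi, hj]
  · rintro ⟨i, j⟩
    rw [hφα, pow_right_comm, show 2 ^ 2 = 3 + 1 from rfl, pow_succ ω, hω.pow_eq_one, one_mul]
  · rintro ⟨i, j⟩
    simp only [hφδ]
    fin_cases j <;> simp
  · rintro ⟨i, j⟩
    simp [RingHom.mem_ker, map_ofNat, hk2]
  · simp [hrank]
  · simp

theorem not_adjoin_eq_top_of_dvd_subIndex {n : ℕ} (hn : n ≠ 1) {β : 𝓞 K} (h : n ∣ subIndex β) :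
    Algebra.adjoin ℤ {β} ≠ ⊤ := fun htop ↦ by
  refine hn (Nat.dvd_one.1 ?_)
  rw [subIndex, htop] at h
  exact h.trans AddSubgroup.index_top.dvd

theorem six_divides_field_index_general (α : 𝓞 K) (F : ℤ[X]) (hF : F.Monic)
    (hdvd : C 72 ∣ F - (X ^ 6 - 1)) (hirr : Irreducible F) (hroot : aeval (α : K) F = 0)
    (hgen : Algebra.adjoin ℚ {(α : K)} = ⊤) :
    (∀ θ : 𝓞 K, Algebra.adjoin ℚ {(θ : K)} = ⊤ → 6 ∣ subIndex θ) ∧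
      ¬ ∃ β : 𝓞 K, Algebra.adjoin ℤ ({β} : Set (𝓞 K)) = ⊤ := by
  obtain rfl : minpoly ℤ α = F := minpoly_eq_of_monic_of_irreducible hF hirr <| by
    simpa [aeval_algebraMap_apply] using hroot
  have hrank : Module.finrank ℚ K = 6 := by
    rw [finrank_eq_natDegree_minpoly_int hgen, natDegree_eq_of_C_dvd_sub (by decide) hF
      (monic_X_pow_sub_C 1 (by norm_num)) hdvd]
    compute_degree!
  have hsix (θ : 𝓞 K) : 6 ∣ subIndex θ := by
    refine Nat.Coprime.mul_dvd_of_dvd_of_dvd (m := 2) (n := 3) (by norm_num) ?_ ?_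
    · exact two_dvd_subIndex_of_C_eight_dvd_minpoly_sub hrank
        ((_root_.map_dvd C (by norm_num)).trans hdvd) θ
    · exact three_dvd_subIndex_of_C_nine_dvd_minpoly_sub hrank
        ((_root_.map_dvd C (by norm_num)).trans hdvd) θ
  exact ⟨fun θ _ ↦ hsix θ, fun ⟨β, hβ⟩ ↦
    not_adjoin_eq_top_of_dvd_subIndex (by norm_num) (hsix β) hβ⟩

end

/-- For `K` defined by a root of `x^6 + 72 x^m + 71`, `6` divides `i(K)`
(equivalently, `6` divides `(ℤ_K : ℤ[θ])` for every generator `θ`); in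
particular `K` is not monogenic. -/
theorem six_divides_field_index
    {K : Type*} [Field K] [NumberField K] (α : 𝓞 K)
    (m : ℕ) (hm : 1 ≤ m) (hm5 : m ≤ 5)
    (F : ℤ[X]) (hF : F = X ^ 6 + C 72 * X ^ m + C 71)
    (hirr : Irreducible F)
    (hroot : Polynomial.aeval (α : K) F = 0)
    (hgen : Algebra.adjoin ℚ {(α : K)} = ⊤) :
    (∀ θ : 𝓞 K, Algebra.adjoin ℚ {(θ : K)} = ⊤ → 6 ∣ subIndex θ) ∧
      ¬ ∃ β : 𝓞 K, Algebra.adjoin ℤ ({β} : Set (𝓞 K)) = ⊤ := by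
  refine six_divides_field_index_general α F ?_ ⟨X ^ m + 1, ?_⟩ hirr hroot hgen
  · rw [hF]
    interval_cases m <;> monicity!
  · rw [hF]
    simp only [map_ofNat]
    ring
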